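/- arXiv:2508.03135 — 2 statements merged into one kernel-verified Lean document; each statement's English description precedes it below -/
import Mathlib

section
/- Let n = m = 1, A < 0, B ≠ 0 real numbers, D := B², 𝔥 := (1/12) A² D, M := 1, and T > 0 (the Ornstein–Uhlenbeck case). With F_t := 𝔥 e^{2A(T−t)}, the minimum over grid densities of Φ_T(ψ) := ∫_0^T F_t/ψ(t)² dt subject to ψ continuous, ψ > 0, ∫_0^T ψ = 1, equals (∫_0^T F_t^{1/3} dt)^3 = (9D/(32A))(e^{(2/3)AT} − 1)^3 = (9/16) G_∞ (1 − e^{(2/3)AT})^3, where G_∞ := −D/(2A), and the optimal density is ψ(t) = (2A/3) e^{(2/3)A(T−t)} / (e^{(2/3)AT} − 1) for 0 ≤ t ≤ T. -/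
open Set MeasureTheory

/-!
Put `g = F ^ (1/3)` and `I = ∫ g`. For `x = g / ψ`, the inequality between `x³` and its tangent
line at `x = I`, `x³ - 3 I² x + 2 I³ = (x - I)² (x + 2 I) ≥ 0`, multiplied by `ψ > 0`, gives
`F / ψ² = g³ / ψ² ≥ 3 I² g - 2 I³ ψ`, and integrating with `∫ ψ = 1` yields `∫ F / ψ² ≥ I³`
(`cube_integral_le`). Equality holds for `ψ = g / I`, which is the density of the theorem, since
here `g` is a constant multiple of `exp ((2/3) A (T - t))`, whose integral is elementary
(`integral_exp_decay`).
-/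

/-- Optimality over densities, by integrating the tangent-line bound of `x ↦ x ^ 3` at `∫ g`. -/
theorem cube_integral_le {T : ℝ} (hT : 0 < T) {g ψ : ℝ → ℝ} (hg : Continuous g)
    (hgpos : ∀ t, 0 < g t) (hψc : ContinuousOn ψ (Icc 0 T))
    (hψpos : ∀ t ∈ Icc (0 : ℝ) T, 0 < ψ t) (hψ : (∫ t in (0 : ℝ)..T, ψ t) = 1) :
    (∫ t in (0 : ℝ)..T, g t) ^ 3 ≤ ∫ t in (0 : ℝ)..T, g t ^ 3 / (ψ t) ^ 2 := by
  set I := ∫ t in (0 : ℝ)..T, g t with hI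
  have hI0 : 0 ≤ I := intervalIntegral.integral_nonneg hT.le fun t _ => (hgpos t).le
  have hgi : IntervalIntegrable g volume 0 T := hg.intervalIntegrable _ _
  have hψi : IntervalIntegrable ψ volume 0 T := hψc.intervalIntegrable_of_Icc hT.le
  have hqi : IntervalIntegrable (fun t => g t ^ 3 / (ψ t) ^ 2) volume 0 T :=
    ((hg.pow 3).continuousOn.div (hψc.pow 2)
      fun t ht => (pow_pos (hψpos t ht) 2).ne').intervalIntegrable_of_Icc hT.le
  have hlin : (∫ t in (0 : ℝ)..T, (3 * I ^ 2 * g t - 2 * I ^ 3 * ψ t)) = I ^ 3 := by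
    rw [intervalIntegral.integral_sub (hgi.const_mul _) (hψi.const_mul _),
      intervalIntegral.integral_const_mul, intervalIntegral.integral_const_mul, hψ, ← hI]
    ring
  rw [← hlin]
  refine intervalIntegral.integral_mono_on hT.le
    ((hgi.const_mul _).sub (hψi.const_mul _)) hqi fun t ht => ?_
  have hp := hψpos t ht
  have hgt := hgpos t
  rw [le_div_iff₀ (pow_pos hp 2)]
  have hfac : 0 ≤ (g t - I * ψ t) ^ 2 * (g t + 2 * (I * ψ t)) := by positivity
  linarith

theorem integral_exp_decay {A : ℝ} (hA : A ≠ 0) (T : ℝ) :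
    (∫ t in (0 : ℝ)..T, Real.exp ((2 / 3) * A * (T - t))) =
      3 / (2 * A) * (Real.exp ((2 / 3) * A * T) - 1) := by
  have hd : ∀ t ∈ uIcc 0 T, HasDerivAt
      (fun t => -(3 / (2 * A)) * Real.exp ((2 / 3) * A * (T - t)))
      (Real.exp ((2 / 3) * A * (T - t))) t := by
    intro t _
    have h := ((((hasDerivAt_id t).const_sub T).const_mul ((2 / 3) * A)).exp).const_mul
      (-(3 / (2 * A)))
    refine h.congr_deriv ?_
    simp only [id]
    field_simp
  rw [intervalIntegral.integral_eq_sub_of_hasDerivAt hd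
    (Continuous.intervalIntegrable (by fun_prop) _ _)]
  simp only [sub_self, mul_zero, Real.exp_zero, sub_zero]
  ring

/-- **Optimal time discretisation for the Ornstein–Uhlenbeck process.**
For the scalar SDE `dX = AX dt + B dW` with `A < 0`, `B ≠ 0`, `D = B²`, `𝔥 = (1/12)A²D`,
`M = 1`, `T > 0`, and `F_t = (1/12)A²D e^{2A(T−t)}`, the minimum of
`Φ_T(ψ) = ∫_0^T F_t/ψ(t)² dt` over continuous positive densities `ψ` with `∫_0^T ψ = 1`
equals `(∫_0^T F_t^{1/3} dt)³ = (9D/(32A))(e^{(2/3)AT} − 1)³ = (9/16)G_∞(1 − e^{(2/3)AT})³`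
with `G_∞ = −D/(2A)`, and it is attained at the density
`ψ(t) = (2A/3)e^{(2/3)A(T−t)}/(e^{(2/3)AT} − 1)`. -/
theorem ou_optimal_density (A B T : ℝ) (hA : A < 0) (hB : B ≠ 0) (hT : 0 < T)
    (D : ℝ) (hD : D = B ^ 2)
    (F : ℝ → ℝ) (hF : ∀ t : ℝ, F t = (1 / 12) * A ^ 2 * D * Real.exp (2 * A * (T - t)))
    (Ginf : ℝ) (hG : Ginf = -D / (2 * A))
    (ψopt : ℝ → ℝ)
    (hψopt : ∀ t : ℝ, ψopt t =
      (2 * A / 3) * Real.exp ((2 / 3) * A * (T - t)) / (Real.exp ((2 / 3) * A * T) - 1)) :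
    (∀ ψ : ℝ → ℝ, ContinuousOn ψ (Icc 0 T) → (∀ t ∈ Icc (0 : ℝ) T, 0 < ψ t) →
      (∫ t in (0 : ℝ)..T, ψ t) = 1 →
      (∫ t in (0 : ℝ)..T, F t ^ ((1 : ℝ) / 3)) ^ 3 ≤ ∫ t in (0 : ℝ)..T, F t / (ψ t) ^ 2) ∧
    ContinuousOn ψopt (Icc 0 T) ∧
    (∀ t ∈ Icc (0 : ℝ) T, 0 < ψopt t) ∧
    (∫ t in (0 : ℝ)..T, ψopt t) = 1 ∧
    (∫ t in (0 : ℝ)..T, F t / (ψopt t) ^ 2) =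
      (∫ t in (0 : ℝ)..T, F t ^ ((1 : ℝ) / 3)) ^ 3 ∧
    (∫ t in (0 : ℝ)..T, F t ^ ((1 : ℝ) / 3)) ^ 3 =
      (9 * D / (32 * A)) * (Real.exp ((2 / 3) * A * T) - 1) ^ 3 ∧
    (∫ t in (0 : ℝ)..T, F t ^ ((1 : ℝ) / 3)) ^ 3 =
      (9 / 16) * Ginf * (1 - Real.exp ((2 / 3) * A * T)) ^ 3 := by
  have hDpos : 0 < D := by rw [hD]; positivity
  set c : ℝ := (1 / 12) * A ^ 2 * D with hc
  have hcpos : 0 < c := by have := hA.ne; positivity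
  set k : ℝ := c ^ ((1 : ℝ) / 3) with hk
  have hkpos : 0 < k := Real.rpow_pos_of_pos hcpos _
  have hk3 : k ^ 3 = c := by
    rw [hk, ← Real.rpow_natCast, ← Real.rpow_mul hcpos.le]
    norm_num
  set g : ℝ → ℝ := fun t => k * Real.exp ((2 / 3) * A * (T - t)) with hg
  have hgc : Continuous g := by fun_prop
  have hgpos : ∀ t, 0 < g t := fun t => by positivity
  have hFg3 : ∀ t, F t = g t ^ 3 := by
    intro t
    rw [hF, hg, mul_pow, hk3, ← Real.exp_nat_mul]
    congr 2
    push_cast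
    ring
  have hFg : ∀ t, F t ^ ((1 : ℝ) / 3) = g t := by
    intro t
    rw [hFg3, ← Real.rpow_natCast, ← Real.rpow_mul (hgpos t).le]
    norm_num
  simp_rw [hFg, hFg3]
  set E : ℝ := Real.exp ((2 / 3) * A * T) with hE
  have hE1 : E < 1 := Real.exp_lt_one_iff.2 (by nlinarith [mul_pos (neg_pos.2 hA) hT])
  have hEne : E - 1 ≠ 0 := (sub_neg.2 hE1).ne
  have hAne : A ≠ 0 := hA.ne
  have hI : (∫ t in (0 : ℝ)..T, g t) = k * (3 / (2 * A) * (E - 1)) := by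
    rw [hg, intervalIntegral.integral_const_mul, integral_exp_decay hAne]
  have hIpos : 0 < ∫ t in (0 : ℝ)..T, g t :=
    intervalIntegral.intervalIntegral_pos_of_pos (hgc.intervalIntegrable _ _) hgpos hT
  have hψg : ∀ t, ψopt t = g t / ∫ t in (0 : ℝ)..T, g t := by
    intro t
    rw [hI, hψopt, hg]
    field_simp
  have hval : (∫ t in (0 : ℝ)..T, g t) ^ 3 = (9 * D / (32 * A)) * (E - 1) ^ 3 := by
    rw [hI, mul_pow, hk3, hc]
    field_simp
    ring
  refine ⟨fun ψ hψc hψpos hψ => cube_integral_le hT hgc hgpos hψc hψpos hψ, ?_, ?_, ?_, ?_,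
    hval, ?_⟩
  · rw [funext hψg]
    exact (hgc.div_const _).continuousOn
  · intro t _
    rw [hψg]
    exact div_pos (hgpos t) hIpos
  · simp_rw [hψg]
    rw [intervalIntegral.integral_div, div_self hIpos.ne']
  · -- For `ψ = g / I` the integrand is `I ^ 2 * g`.
    have hint : ∀ t, g t ^ 3 / ψopt t ^ 2 = (∫ t in (0 : ℝ)..T, g t) ^ 2 * g t := by
      intro t
      have h1 := (hgpos t).ne'
      have h2 := hIpos.ne'
      rw [hψg]
      generalize (∫ t in (0 : ℝ)..T, g t) = I at h2 ⊢
      field_simp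
    simp_rw [hint]
    rw [intervalIntegral.integral_const_mul]
    ring
  · rw [hval, hG]
    field_simp
    ring
end

section
/- Let n = m = 1, A < 0, B ≠ 0 real numbers, D := B², 𝔥 := (1/12) A² D, M := 1, T > 0, and F_t := 𝔥 e^{2A(T−t)}. Define Φ_T(1/T) := T² ∫_0^T F_t dt = (1/12) G_∞ (AT)² (1 − e^{2AT}) (the asymptotic terminal error coefficient for the uniform grid, with G_∞ := −D/(2A)) and min_φ Φ_T(ψ) := (∫_0^T F_t^{1/3} dt)³ (the optimal coefficient). Then the ratio satisfies Φ_T(1/T) / min_φ Φ_T(ψ) = (4/27) (AT)² (1 − e^{2AT}) / (1 − e^{(2/3)AT})³, and this ratio is asymptotically equivalent to (4/27)(AT)² as T → +∞. -/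
/-!
Both coefficients reduce to `∫₀ᵀ e^{c(T-t)} dt = (e^{cT} - 1)/c`: with `c = 2A` for the uniform grid,
and with `c = 2A/3` for the optimal one, since the cube root of `h e^{2A(T-t)}` is
`h^{1/3} e^{(2A/3)(T-t)}`. Cubing turns `h^{1/3}` back into `h = A²D/12 > 0`, which cancels
in the ratio. As `A < 0`, both exponentials in the ratio tend to `0` when `T → +∞`, which gives
the asymptotic equivalence.
-/

open Set Filter MeasureTheory

theorem integral_exp_mul_sub (c T : ℝ) (hc : c ≠ 0) :
    ∫ t in (0 : ℝ)..T, Real.exp (c * (T - t)) = (Real.exp (c * T) - 1) / c := by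
  rw [intervalIntegral.integral_comp_sub_left (fun x => Real.exp (c * x)) T,
    intervalIntegral.integral_comp_mul_left (fun x => Real.exp x) hc, integral_exp]
  simp [div_eq_inv_mul]

theorem tendsto_exp_mul_atTop_of_neg (c : ℝ) (hc : c < 0) :
    Tendsto (fun T : ℝ => Real.exp (c * T)) atTop (nhds 0) :=
  Real.tendsto_exp_atBot.comp (tendsto_id.const_mul_atTop_of_neg hc)

/-- **Advantage of the optimal grid over the uniform grid for the OU process.**
For the scalar SDE `dX = AX dt + B dW` with `A < 0`, `B ≠ 0`, `D = B²`,
`F_{T,t} = (1/12)A²D e^{2A(T−t)}`, the uniform-grid coefficient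
`Φ_T(1/T) = T²∫_0^T F_{T,t} dt` equals `(1/12)G_∞(AT)²(1 − e^{2AT})` with
`G_∞ = −D/(2A)`, the optimal coefficient is `min_φ Φ_T(ψ) = (∫_0^T F_{T,t}^{1/3} dt)³`,
their ratio equals `(4/27)(AT)²(1 − e^{2AT})/(1 − e^{(2/3)AT})³`, and this ratio is
asymptotically equivalent to `(4/27)(AT)²` as `T → +∞`. -/
theorem ou_uniform_vs_optimal (A B : ℝ) (hA : A < 0) (hB : B ≠ 0)
    (D : ℝ) (hD : D = B ^ 2)
    (Ginf : ℝ) (hG : Ginf = -D / (2 * A))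
    (F : ℝ → ℝ → ℝ)
    (hF : ∀ T t : ℝ, F T t = (1 / 12) * A ^ 2 * D * Real.exp (2 * A * (T - t)))
    (Φunif Φopt : ℝ → ℝ)
    (hunif : ∀ T : ℝ, Φunif T = T ^ 2 * ∫ t in (0 : ℝ)..T, F T t)
    (hopt : ∀ T : ℝ, Φopt T = (∫ t in (0 : ℝ)..T, F T t ^ ((1 : ℝ) / 3)) ^ 3) :
    (∀ T : ℝ, 0 < T →
      Φunif T = (1 / 12) * Ginf * (A * T) ^ 2 * (1 - Real.exp (2 * A * T))) ∧
    (∀ T : ℝ, 0 < T →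
      Φunif T / Φopt T =
        (4 / 27) * (A * T) ^ 2 * (1 - Real.exp (2 * A * T)) /
          (1 - Real.exp ((2 / 3) * A * T)) ^ 3) ∧
    Tendsto (fun T : ℝ => (Φunif T / Φopt T) / ((4 / 27) * (A * T) ^ 2))
      atTop (nhds 1) := by
  have hA0 : A ≠ 0 := hA.ne
  have hDpos : 0 < D := by rw [hD]; positivity
  set h : ℝ := (1 / 12) * A ^ 2 * D with hh
  have hpos : 0 < h := by positivity
  have e1 : ∀ T, Φunif T = T ^ 2 * (h * ((Real.exp (2 * A * T) - 1) / (2 * A))) := by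
    intro T
    rw [hunif]
    simp only [hF]
    rw [intervalIntegral.integral_const_mul, integral_exp_mul_sub _ _ (by simpa using hA0)]
  have e2 : ∀ T, Φopt T = h * ((Real.exp ((2 / 3) * A * T) - 1) / ((2 / 3) * A)) ^ 3 := by
    intro T
    have hroot : ∀ t, F T t ^ ((1 : ℝ) / 3) =
        h ^ ((1 : ℝ) / 3) * Real.exp ((2 / 3) * A * (T - t)) := by
      intro t
      rw [hF, Real.mul_rpow hpos.le (Real.exp_pos _).le, ← Real.exp_mul]
      ring_nf
    have hcube : (h ^ ((1 : ℝ) / 3)) ^ 3 = h := by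
      rw [← Real.rpow_natCast, ← Real.rpow_mul hpos.le]
      norm_num
    rw [hopt]
    simp only [hroot]
    rw [intervalIntegral.integral_const_mul,
      integral_exp_mul_sub _ _ (mul_ne_zero (by norm_num) hA0), mul_pow, hcube]
  have hne : ∀ T : ℝ, 0 < T → 1 - Real.exp ((2 / 3) * A * T) ≠ 0 := by
    intro T hT
    have : Real.exp ((2 / 3) * A * T) < 1 := Real.exp_lt_one_iff.mpr (by nlinarith)
    linarith
  have ratio : ∀ T : ℝ, 0 < T →
      Φunif T / Φopt T =
        (4 / 27) * (A * T) ^ 2 * (1 - Real.exp (2 * A * T)) /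
          (1 - Real.exp ((2 / 3) * A * T)) ^ 3 := by
    intro T hT
    have hn := hne T hT
    rw [e1, e2]
    generalize Real.exp (2 * A * T) = x
    generalize Real.exp ((2 / 3) * A * T) = y at hn ⊢
    have hn' : y - 1 ≠ 0 := fun H => hn (by linarith)
    have h0 := hpos.ne'
    clear_value h
    rw [show 1 - y = -(y - 1) by ring]
    field_simp
    ring
  refine ⟨fun T hT => ?_, ratio, ?_⟩
  · rw [e1, hG, hh]
    field_simp
    ring
  · have hlim : Tendsto (fun T : ℝ => (1 - Real.exp (2 * A * T)) /
        (1 - Real.exp ((2 / 3) * A * T)) ^ 3) atTop (nhds ((1 - 0) / (1 - 0) ^ 3)) :=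
      ((tendsto_exp_mul_atTop_of_neg (2 * A) (by linarith)).const_sub 1).div
        (((tendsto_exp_mul_atTop_of_neg ((2 / 3) * A) (by linarith)).const_sub 1).pow 3)
        (by norm_num)
    rw [show ((1 : ℝ) - 0) / (1 - 0) ^ 3 = 1 by norm_num] at hlim
    refine hlim.congr' ?_
    filter_upwards [eventually_gt_atTop 0] with T hT
    have hn := hne T hT
    have hT0 := hT.ne'
    rw [ratio T hT]
    field_simp
end
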